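/- Second law of thermodynamics for quantum convolution: for every n-qudit state ρ, every α ∈ [0, +∞], and every integer N ≥ 0, H_α(⊠^{N+1} ρ) ≥ H_α(⊠^N ρ); that is, the Rényi entropy of the repeated self-convolution is non-decreasing in the number of convolutions. -/

import Mathlib

open scoped BigOperators ComplexOrder Classical ENNReal
open Matrix

namespace PaperQI

/-- The computational-basis index set `ℤ_d^n` for an `n`-qudit system. -/
abbrev QV (d n : ℕ) := Fin n → ZMod d

/-- Matrices (linear operators) on the `n`-qudit Hilbert space `(ℂ^d)^{⊗ n}`,
written in the computational basis indexed by `ℤ_d^n`. -/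
abbrev Mat (d n : ℕ) := Matrix (QV d n) (QV d n) ℂ

/-- The character `ξ^z = exp(2πi z/d)` for `z ∈ ℤ_d`. -/
noncomputable def ch (d : ℕ) (z : ZMod d) : ℂ :=
  Complex.exp (2 * Real.pi * Complex.I * (z.val : ℂ) / (d : ℂ))

/-- Dot product on `ℤ_d^n`. -/
def qdot {d n : ℕ} (p k : QV d n) : ZMod d := ∑ i, p i * k i

/-- The `n`-qudit Weyl operator `w(p,q) = ⊗_i ξ^{-2⁻¹ p_i q_i} Z^{p_i} X^{q_i}`
(for odd prime `d`).  Its matrix entries are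
`w(p,q)[k+q, k] = ξ^{p·k + 2⁻¹ p·q}`. -/
noncomputable def weyl (d n : ℕ) [Fact (Nat.Prime d)] (p q : QV d n) : Mat d n :=
  Matrix.of fun k' k =>
    if k' = k + q then ch d (qdot p k + (2 : ZMod d)⁻¹ * qdot p q) else 0

/-- `ρ` is an `n`-qudit state: positive semidefinite with trace one. -/
def IsState (d n : ℕ) [Fact (Nat.Prime d)] (ρ : Mat d n) : Prop :=
  ρ.PosSemidef ∧ ρ.trace = 1

/-- The characteristic function `Ξ_ρ(p,q) = Tr[ρ w(-p,-q)]`. -/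
noncomputable def xi (d n : ℕ) [Fact (Nat.Prime d)] (ρ : Mat d n)
    (pq : QV d n × QV d n) : ℂ :=
  (ρ * weyl d n (-pq.1) (-pq.2)).trace

/-- The mean state `M(ρ) = d^{-n} ∑_{|Ξ_ρ(p,q)| = 1} Ξ_ρ(p,q) w(p,q)`. -/
noncomputable def meanState (d n : ℕ) [Fact (Nat.Prime d)] (ρ : Mat d n) : Mat d n :=
  ((d : ℂ) ^ n)⁻¹ •
    ∑ pq : QV d n × QV d n,
      if ‖xi d n ρ pq‖ = 1 then xi d n ρ pq • weyl d n pq.1 pq.2 else 0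

/-- `ρ` is a minimal stabilizer-projection state (MSPS): for some `r ≤ n` there are
mutually commuting Weyl operators `w(p_i,q_i)`, `i = 1,…,r`, whose labels generate a
subgroup of `V^n` of order `d^r`, and phases `x ∈ ℤ_d^r`, such that
`ρ = d^{-(n-r)} ∏_i ( (1/d) ∑_{k ∈ ℤ_d} (ξ^{x_i} w(p_i,q_i))^k )`. -/
noncomputable def IsMSPS (d n : ℕ) [Fact (Nat.Prime d)] (ρ : Mat d n) : Prop :=
  ∃ r : ℕ, r ≤ n ∧
    ∃ (p q : Fin r → QV d n) (x : Fin r → ZMod d),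
      (∀ i j, Commute (weyl d n (p i) (q i)) (weyl d n (p j) (q j))) ∧
      Nat.card (AddSubgroup.closure (Set.range fun i => (p i, q i)) :
        AddSubgroup (QV d n × QV d n)) = d ^ r ∧
      ρ = ((d : ℂ) ^ (n - r))⁻¹ •
        (List.ofFn fun i =>
          (d : ℂ)⁻¹ • ∑ k : ZMod d, (ch d (x i) • weyl d n (p i) (q i)) ^ k.val).prod

/-- The magic gap `MG(ρ) = 1 - max{|Ξ_ρ(p,q)| : Ξ_ρ(p,q) ≠ 0, |Ξ_ρ(p,q)| ≠ 1}`,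
and `MG(ρ) = 0` if this set is empty. -/
noncomputable def magicGap (d n : ℕ) [Fact (Nat.Prime d)] (ρ : Mat d n) : ℝ :=
  let s : Finset ℝ :=
    (Finset.univ.filter fun pq : QV d n × QV d n =>
      xi d n ρ pq ≠ 0 ∧ ‖xi d n ρ pq‖ ≠ 1).image
      fun pq => ‖xi d n ρ pq‖
  if h : s.Nonempty then 1 - s.max' h else 0

/-- Von Neumann entropy `H(ρ) = -∑ λ_i log λ_i` (natural log, eigenvalues of `ρ`),
with the convention `0 log 0 = 0`; junk value `0` on non-Hermitian matrices. -/
noncomputable def vnEnt {d n : ℕ} [Fact (Nat.Prime d)] (ρ : Mat d n) : ℝ :=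
  if h : ρ.IsHermitian then -∑ i, h.eigenvalues i * Real.log (h.eigenvalues i) else 0

/-- Rényi entropy `H_α` for `α ∈ [0,∞]`:  `H_0 = log rank`, `H_1 = H` (von Neumann),
`H_∞ = -log λ_max`, and `H_α = (1-α)⁻¹ log ∑ λ_i^α` otherwise. -/
noncomputable def renyiEnt {d n : ℕ} [Fact (Nat.Prime d)] (α : ℝ≥0∞) (ρ : Mat d n) : ℝ :=
  if h : ρ.IsHermitian then
    if α = 0 then Real.log (ρ.rank : ℝ)
    else if α = 1 then -∑ i, h.eigenvalues i * Real.log (h.eigenvalues i)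
    else if α = ⊤ then -Real.log (⨆ i, h.eigenvalues i)
    else (1 - α.toReal)⁻¹ * Real.log (∑ i, h.eigenvalues i ^ α.toReal)
  else 0

/-- Matrix logarithm on the support: `log ρ = U diag(log λ_i) U†` via the spectral
decomposition, with `log 0 = 0` on the kernel; junk value `0` off Hermitian matrices. -/
noncomputable def matLog {d n : ℕ} [Fact (Nat.Prime d)] (ρ : Mat d n) : Mat d n :=
  if h : ρ.IsHermitian then
    (h.eigenvectorUnitary : Mat d n) *
      Matrix.diagonal (fun i => (Real.log (h.eigenvalues i) : ℂ)) *
      star (h.eigenvectorUnitary : Mat d n)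
  else 0

/-- Matrix real power on the support: `ρ^t = U diag(λ_i^t) U†`, with `0^t = 0` on the
kernel (for `t ≠ 0`); junk value `0` off Hermitian matrices. -/
noncomputable def matRpow {d n : ℕ} [Fact (Nat.Prime d)] (ρ : Mat d n) (t : ℝ) : Mat d n :=
  if h : ρ.IsHermitian then
    (h.eigenvectorUnitary : Mat d n) *
      Matrix.diagonal (fun i => ((h.eigenvalues i ^ t : ℝ) : ℂ)) *
      star (h.eigenvectorUnitary : Mat d n)
  else 0

/-- Support inclusion `supp ρ ⊆ supp σ`, expressed as `ker σ ⊆ ker ρ`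
(the correct notion for positive semidefinite matrices). -/
def suppLE {d n : ℕ} [Fact (Nat.Prime d)] (ρ σ : Mat d n) : Prop :=
  ∀ v : QV d n → ℂ, σ.mulVec v = 0 → ρ.mulVec v = 0

/-- Relative entropy `D(ρ‖σ) = Tr[ρ(log ρ - log σ)]` when `supp ρ ⊆ supp σ`, else `+∞`. -/
noncomputable def relEnt {d n : ℕ} [Fact (Nat.Prime d)] (ρ σ : Mat d n) : EReal :=
  if suppLE ρ σ then (((ρ * (matLog ρ - matLog σ)).trace.re : ℝ) : EReal) else ⊤

/-- Sandwiched Rényi relative entropy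
`D_α(ρ‖σ) = (α-1)⁻¹ log Tr[(σ^{(1-α)/(2α)} ρ σ^{(1-α)/(2α)})^α]` for `α ≠ 1`
(with `+∞` when `supp ρ ⊄ supp σ`), and `D_1 = D` the relative entropy. -/
noncomputable def sandRenyi {d n : ℕ} [Fact (Nat.Prime d)] (α : ℝ) (ρ σ : Mat d n) :
    EReal :=
  if α = 1 then relEnt ρ σ
  else if suppLE ρ σ then
    let x : ℝ := (α - 1)⁻¹ * Real.log
      ((matRpow (matRpow σ ((1 - α) / (2 * α)) * ρ * matRpow σ ((1 - α) / (2 * α)))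
        α).trace.re)
    (x : EReal)
  else ⊤

/-- The key unitary `U|i,j⟩ = |N g₁₁ i - N g₁₀ j, -N g₀₁ i + N g₀₀ j⟩`,
where `N = (det G)⁻¹` in `ℤ_d`. -/
noncomputable def convU (d n : ℕ) [Fact (Nat.Prime d)] (g00 g01 g10 g11 : ZMod d) :
    Matrix (QV d n × QV d n) (QV d n × QV d n) ℂ :=
  Matrix.of fun kl ij =>
    if kl = ((fun a => (g00 * g11 - g01 * g10)⁻¹ * g11 * ij.1 a
                      - (g00 * g11 - g01 * g10)⁻¹ * g10 * ij.2 a : QV d n),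
             (fun a => -((g00 * g11 - g01 * g10)⁻¹ * g01) * ij.1 a
                      + (g00 * g11 - g01 * g10)⁻¹ * g00 * ij.2 a : QV d n))
    then 1 else 0

/-- Tensor (Kronecker) product of two `n`-qudit operators, on the doubled system. -/
def kron {d n : ℕ} (ρ σ : Mat d n) : Matrix (QV d n × QV d n) (QV d n × QV d n) ℂ :=
  Matrix.of fun ij kl => ρ ij.1 kl.1 * σ ij.2 kl.2

/-- Partial trace over the second `n`-qudit factor. -/
noncomputable def ptrB {d n : ℕ} [Fact (Nat.Prime d)]
    (M : Matrix (QV d n × QV d n) (QV d n × QV d n) ℂ) : Mat d n :=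
  Matrix.of fun i i' => ∑ j : QV d n, M (i, j) (i', j)

/-- The convolution `ρ ⊠ σ = Tr_B[U (ρ ⊗ σ) U†]` with parameter matrix
`G = [g₀₀, g₀₁; g₁₀, g₁₁]`. -/
noncomputable def conv (d n : ℕ) [Fact (Nat.Prime d)] (g00 g01 g10 g11 : ZMod d)
    (ρ σ : Mat d n) : Mat d n :=
  ptrB (convU d n g00 g01 g10 g11 * kron ρ σ * (convU d n g00 g01 g10 g11)ᴴ)

/-- The beam-splitter unitary `U_{s,t}|i,j⟩ = |s i + t j, t i - s j⟩`. -/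
noncomputable def bsU (d n : ℕ) [Fact (Nat.Prime d)] (s t : ZMod d) :
    Matrix (QV d n × QV d n) (QV d n × QV d n) ℂ :=
  Matrix.of fun kl ij =>
    if kl = ((fun a => s * ij.1 a + t * ij.2 a : QV d n),
             (fun a => t * ij.1 a - s * ij.2 a : QV d n))
    then 1 else 0

/-- The beam-splitter convolution `ρ ⊠_{s,t} σ = Tr_B[U_{s,t} (ρ ⊗ σ) U_{s,t}†]`. -/
noncomputable def bsConv (d n : ℕ) [Fact (Nat.Prime d)] (s t : ZMod d)
    (ρ σ : Mat d n) : Mat d n :=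
  ptrB (bsU d n s t * kron ρ σ * (bsU d n s t)ᴴ)

/-- Iterated self-convolution: `⊠^0 ρ = ρ` and `⊠^{N+1} ρ = (⊠^N ρ) ⊠ ρ`. -/
noncomputable def bsIter (d n : ℕ) [Fact (Nat.Prime d)] (s t : ZMod d) :
    ℕ → Mat d n → Mat d n
  | 0, ρ => ρ
  | N + 1, ρ => bsConv d n s t (bsIter d n s t N ρ) ρ

/-- `ρ` is the pure stabilizer state `|ψ⟩⟨ψ|` with stabilizer label group `S ⊆ V^n`:
`S` has order `d^n` and `ψ` is a common eigenvector of all `w(p,q)`, `(p,q) ∈ S`. -/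
noncomputable def IsPureStabilizerWithGroup (d n : ℕ) [Fact (Nat.Prime d)]
    (ρ : Mat d n) (S : AddSubgroup (QV d n × QV d n)) : Prop :=
  Nat.card S = d ^ n ∧
    ∃ ψ : QV d n → ℂ, ψ ≠ 0 ∧
      ρ = Matrix.of (fun a b => ψ a * starRingEnd ℂ (ψ b)) ∧
      ∀ pq ∈ S, ∃ c : ℂ, (weyl d n pq.1 pq.2).mulVec ψ = c • ψ

/-- `ρ` is a pure stabilizer state. -/
noncomputable def IsPureStabilizer (d n : ℕ) [Fact (Nat.Prime d)] (ρ : Mat d n) : Prop :=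
  ∃ S : AddSubgroup (QV d n × QV d n), IsPureStabilizerWithGroup d n ρ S

/-- `ρ` is a stabilizer state: a convex combination of pure stabilizer states. -/
noncomputable def IsStabilizerState (d n : ℕ) [Fact (Nat.Prime d)] (ρ : Mat d n) : Prop :=
  ∃ (m : ℕ) (p : Fin m → ℝ) (τ : Fin m → Mat d n),
    (∀ i, 0 ≤ p i) ∧ ∑ i, p i = 1 ∧ (∀ i, IsPureStabilizer d n (τ i)) ∧
    ρ = ∑ i, (p i : ℂ) • τ i

/-- `U` is a Clifford unitary: a unitary mapping each Weyl operator, under conjugation,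
to a complex phase times a Weyl operator. -/
noncomputable def IsClifford (d n : ℕ) [Fact (Nat.Prime d)] (U : Mat d n) : Prop :=
  U ∈ Matrix.unitaryGroup (QV d n) ℂ ∧
    ∀ pq : QV d n × QV d n, ∃ (c : ℂ) (pq' : QV d n × QV d n),
      ‖c‖ = 1 ∧ U * weyl d n pq.1 pq.2 * Uᴴ = c • weyl d n pq'.1 pq'.2

/-- The divergence-based quantum Fisher information `J(ρ; H) = Tr[ρ [H,[H, log ρ]]]`. -/
noncomputable def fisherJ {d n : ℕ} [Fact (Nat.Prime d)] (ρ H : Mat d n) : ℝ :=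
  (ρ * (H * (H * matLog ρ - matLog ρ * H) - (H * matLog ρ - matLog ρ * H) * H)).trace.re

/-- Embed a single-qudit operator at site `k` of an `n`-qudit system
(tensored with the identity elsewhere). -/
noncomputable def embedAt (d n : ℕ) (k : Fin n) (M : Matrix (ZMod d) (ZMod d) ℂ) :
    Mat d n :=
  Matrix.of fun v w => if ∀ i, i ≠ k → v i = w i then M (v k) (w k) else 0

/-- The rank-one projection `H_j^Z = |j⟩⟨j|` onto the eigenvector of `Z`
with eigenvalue `ξ^j`. -/
noncomputable def projZ (d : ℕ) (j : ZMod d) : Matrix (ZMod d) (ZMod d) ℂ :=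
  Matrix.of fun a b => if a = j ∧ b = j then 1 else 0

/-- The rank-one projection `H_j^X` onto the eigenvector of `X` with eigenvalue `ξ^j`;
its entries are `(H_j^X)_{a b} = d⁻¹ ξ^{j(b-a)}`. -/
noncomputable def projX (d : ℕ) (j : ZMod d) : Matrix (ZMod d) (ZMod d) ℂ :=
  Matrix.of fun a b => (d : ℂ)⁻¹ * ch d (j * (b - a))

/-- Total Fisher information
`J(ρ) = ∑_{k=1}^n ∑_{j ∈ ℤ_d} J(ρ; H_j^{X_k}) + J(ρ; H_j^{Z_k})`. -/
noncomputable def fisherTotal (d n : ℕ) [Fact (Nat.Prime d)] (ρ : Mat d n) : ℝ :=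
  ∑ k : Fin n, ∑ j : ZMod d,
    (fisherJ ρ (embedAt d n k (projX d j)) + fisherJ ρ (embedAt d n k (projZ d j)))

/-- Holevo capacity of a channel `E`:
`χ(E) = sup H(∑ p_i E(ρ_i)) - ∑ p_i H(E(ρ_i))` over finite ensembles of states. -/
noncomputable def holevoCap (d n : ℕ) [Fact (Nat.Prime d)] (E : Mat d n → Mat d n) : ℝ :=
  ⨆ m : ℕ, ⨆ p : Fin m → ℝ, ⨆ ρs : Fin m → Mat d n,
    ⨆ _ : (∀ i, 0 ≤ p i) ∧ ∑ i, p i = 1 ∧ ∀ i, IsState d n (ρs i),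
      (vnEnt (∑ i, (p i : ℂ) • E (ρs i)) - ∑ i, p i * vnEnt (E (ρs i)))

/-- Hilbert–Schmidt norm `‖A‖₂ = (Tr[A†A])^{1/2}`. -/
noncomputable def hsNorm {d n : ℕ} [Fact (Nat.Prime d)] (A : Mat d n) : ℝ :=
  Real.sqrt ((Aᴴ * A).trace.re)

/-- Trace norm `‖A‖₁ = Tr[(A†A)^{1/2}]`. -/
noncomputable def trNorm {d n : ℕ} [Fact (Nat.Prime d)] (A : Mat d n) : ℝ :=
  (matRpow (Aᴴ * A) (2⁻¹ : ℝ)).trace.re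

/-- Tensor product of an `n₁`-qudit operator with an `n₂`-qudit operator,
as an `(n₁+n₂)`-qudit operator. -/
def tensorMat (d n₁ n₂ : ℕ) (ρ₁ : Mat d n₁) (ρ₂ : Mat d n₂) : Mat d (n₁ + n₂) :=
  Matrix.of fun v w =>
    ρ₁ (fun i => v (Fin.castAdd n₂ i)) (fun i => w (Fin.castAdd n₂ i)) *
    ρ₂ (fun j => v (Fin.natAdd n₁ j)) (fun j => w (Fin.natAdd n₁ j))

/-! ### Qubit (`d = 2`) specific definitions -/

/-- The `n`-qubit Weyl (Pauli) operator `w(p,q) = ⊗_i i^{-p_i q_i} Z^{p_i} X^{q_i}`. -/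
noncomputable def weyl2 (n : ℕ) (p q : Fin n → ZMod 2) :
    Matrix (Fin n → ZMod 2) (Fin n → ZMod 2) ℂ :=
  Matrix.of fun k' k =>
    if k' = k + q then
      ∏ i, ((-Complex.I) ^ ((p i).val * (q i).val) *
        (-1 : ℂ) ^ ((p i * (k i + q i)).val))
    else 0

/-- The `n`-qubit characteristic function `Ξ_ρ(p,q) = Tr[ρ w(p,q)†]`. -/
noncomputable def xi2 (n : ℕ) (ρ : Matrix (Fin n → ZMod 2) (Fin n → ZMod 2) ℂ)
    (pq : (Fin n → ZMod 2) × (Fin n → ZMod 2)) : ℂ :=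
  (ρ * (weyl2 n pq.1 pq.2)ᴴ).trace

/-- The logarithmic magic gap
`LMG(ρ) = -log₂ max{|Ξ_ρ(p,q)| : Ξ_ρ(p,q) ≠ 0, |Ξ_ρ(p,q)| ≠ 1}` (`0` if the set is
empty). -/
noncomputable def lmg (n : ℕ) (ρ : Matrix (Fin n → ZMod 2) (Fin n → ZMod 2) ℂ) : ℝ :=
  let s : Finset ℝ :=
    (Finset.univ.filter fun pq : (Fin n → ZMod 2) × (Fin n → ZMod 2) =>
      xi2 n ρ pq ≠ 0 ∧ ‖xi2 n ρ pq‖ ≠ 1).image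
      fun pq => ‖xi2 n ρ pq‖
  if h : s.Nonempty then -Real.logb 2 (s.max' h) else 0

/-- `U` is an `n`-qubit Clifford unitary. -/
noncomputable def IsClifford2 (n : ℕ) (U : Matrix (Fin n → ZMod 2) (Fin n → ZMod 2) ℂ) :
    Prop :=
  U ∈ Matrix.unitaryGroup (Fin n → ZMod 2) ℂ ∧
    ∀ pq : (Fin n → ZMod 2) × (Fin n → ZMod 2),
      ∃ (c : ℂ) (pq' : (Fin n → ZMod 2) × (Fin n → ZMod 2)),
        ‖c‖ = 1 ∧ U * weyl2 n pq.1 pq.2 * Uᴴ = c • weyl2 n pq'.1 pq'.2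

/-- The T gate `diag(1, e^{iπ/4})` acting on qubit `k` of an `n`-qubit system. -/
noncomputable def tGateAt (n : ℕ) (k : Fin n) :
    Matrix (Fin n → ZMod 2) (Fin n → ZMod 2) ℂ :=
  embedAt 2 n k (Matrix.of fun a b =>
    if a = b then (if a = 0 then 1 else Complex.exp (Real.pi * Complex.I / 4)) else 0)

/-- An `n`-qubit state: positive semidefinite with trace one. -/
def IsState2 (n : ℕ) (ρ : Matrix (Fin n → ZMod 2) (Fin n → ZMod 2) ℂ) : Prop :=
  ρ.PosSemidef ∧ ρ.trace = 1

end PaperQI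

namespace PaperQI

section General

variable {ι : Type*} [Fintype ι] [DecidableEq ι]

/-- A positive, trace preserving, unital linear map acts on spectra by a doubly
stochastic matrix. -/
lemma exists_doublyStochastic (E : Matrix ι ι ℂ →ₗ[ℂ] Matrix ι ι ℂ)
    (hpos : ∀ A, A.PosSemidef → (E A).PosSemidef)
    (htr : ∀ A, (E A).trace = A.trace) (hone : E 1 = 1)
    (A : Matrix ι ι ℂ) (hA : A.IsHermitian) (hB : (E A).IsHermitian) :
    ∃ D : ι → ι → ℝ, (∀ b a, 0 ≤ D b a) ∧ (∀ b, ∑ a, D b a = 1) ∧ (∀ a, ∑ b, D b a = 1) ∧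
      ∀ b, hB.eigenvalues b = ∑ a, D b a * hA.eigenvalues a := by
  set V : Matrix ι ι ℂ := (hA.eigenvectorUnitary : Matrix ι ι ℂ) with hV
  set W : Matrix ι ι ℂ := (hB.eigenvectorUnitary : Matrix ι ι ℂ) with hW
  have hVV : V * Vᴴ = 1 := Unitary.mul_star_self_of_mem hA.eigenvectorUnitary.2
  have hVV' : Vᴴ * V = 1 := Unitary.star_mul_self_of_mem hA.eigenvectorUnitary.2
  have hWW : W * Wᴴ = 1 := Unitary.mul_star_self_of_mem hB.eigenvectorUnitary.2
  have hWW' : Wᴴ * W = 1 := Unitary.star_mul_self_of_mem hB.eigenvectorUnitary.2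
  have hAspec : A = V * diagonal (fun i => (hA.eigenvalues i : ℂ)) * Vᴴ := by
    have := hA.spectral_theorem
    rw [Unitary.conjStarAlgAut_apply] at this
    exact this
  have hBspec : E A = W * diagonal (fun i => (hB.eigenvalues i : ℂ)) * Wᴴ := by
    have := hB.spectral_theorem
    rw [Unitary.conjStarAlgAut_apply] at this
    exact this
  let P : ι → Matrix ι ι ℂ := fun a => V * diagonal (Pi.single a (1 : ℂ)) * Vᴴ
  let F : Matrix ι ι ℂ →ₗ[ℂ] Matrix ι ι ℂ :=
    { toFun := fun M => Wᴴ * E M * W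
      map_add' := by intro x y; simp [Matrix.mul_add, Matrix.add_mul]
      map_smul' := by intro c x; simp }
  have hP : ∀ a, (P a).PosSemidef := by
    intro a
    refine PosSemidef.mul_mul_conjTranspose_same (PosSemidef.diagonal ?_) V
    intro i
    by_cases h : i = a
    · subst h; simp
    · simp [Pi.single_apply, h]
  have hPtr : ∀ a, (P a).trace = 1 := by
    intro a
    change (V * diagonal (Pi.single a (1 : ℂ)) * Vᴴ).trace = 1
    rw [Matrix.trace_mul_cycle, hVV', Matrix.one_mul, Matrix.trace_diagonal]
    simp
  have hcomb : ∀ c : ι → ℂ, V * diagonal c * Vᴴ = ∑ a, c a • P a := by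
    intro c
    have : diagonal c = ∑ a, c a • diagonal (Pi.single a (1 : ℂ)) := by
      ext i j
      rw [Matrix.sum_apply]
      by_cases h : i = j
      · subst h; simp [Pi.single_apply]
      · simp [h]
    rw [this]
    simp [P, Matrix.mul_sum, Matrix.sum_mul]
  have hPsum : ∑ a, P a = 1 := by
    have := hcomb (fun _ => 1)
    rw [diagonal_one, Matrix.mul_one, hVV] at this
    simpa using this.symm
  have hF : ∀ a, (F (P a)).PosSemidef := by
    intro a
    exact (hpos _ (hP a)).conjTranspose_mul_mul_same W
  have hreal : ∀ a b, (((F (P a) b b).re : ℝ) : ℂ) = F (P a) b b := by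
    intro a b
    have := (hF a).diag_nonneg (i := b)
    rw [Complex.nonneg_iff] at this
    apply Complex.ext <;> simp [← this.2]
  refine ⟨fun b a => (F (P a) b b).re, ?_, ?_, ?_, ?_⟩
  · intro b a
    exact (Complex.nonneg_iff.1 ((hF a).diag_nonneg (i := b))).1
  · intro b
    have : ∑ a, F (P a) = 1 := by
      rw [← map_sum, hPsum]
      change Wᴴ * E 1 * W = 1
      rw [hone, Matrix.mul_one, hWW']
    have h2 := congrArg (fun M : Matrix ι ι ℂ => (M b b).re) this
    simpa [Matrix.sum_apply] using h2
  · intro a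
    have : (F (P a)).trace = 1 := by
      change (Wᴴ * E (P a) * W).trace = 1
      rw [Matrix.trace_mul_cycle, hWW, Matrix.one_mul, htr, hPtr]
    have h2 := congrArg Complex.re this
    simpa [Matrix.trace] using h2
  · intro b
    have h1 : F A = diagonal (fun i => (hB.eigenvalues i : ℂ)) := by
      change Wᴴ * E A * W = _
      calc Wᴴ * E A * W = Wᴴ * (W * diagonal (fun i => (hB.eigenvalues i : ℂ)) * Wᴴ) * W :=
            congrArg (fun M => Wᴴ * M * W) hBspec
        _ = Wᴴ * (W * diagonal (fun i => (hB.eigenvalues i : ℂ)) * Wᴴ) * W := rfl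
        _ = (Wᴴ * W) * diagonal (fun i => (hB.eigenvalues i : ℂ)) * (Wᴴ * W) := by
            simp only [Matrix.mul_assoc]
        _ = _ := by rw [hWW']; simp
    have h2 : F A = ∑ a, (hA.eigenvalues a : ℂ) • F (P a) := by
      conv_lhs => rw [hAspec, hcomb]
      simp
    have h3 := congrArg (fun M : Matrix ι ι ℂ => (M b b).re) (h1.symm.trans h2)
    simp [Matrix.sum_apply] at h3
    rw [h3]
    exact Finset.sum_congr rfl fun a _ => mul_comm _ _

variable {D : ι → ι → ℝ} {l m : ι → ℝ}

lemma jensen_convex (h0 : ∀ b a, 0 ≤ D b a) (h1 : ∀ b, ∑ a, D b a = 1)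
    (h2 : ∀ a, ∑ b, D b a = 1) (hm : ∀ b, m b = ∑ a, D b a * l a) (hl : ∀ a, 0 ≤ l a)
    {f : ℝ → ℝ} (hf : ConvexOn ℝ (Set.Ici 0) f) : ∑ b, f (m b) ≤ ∑ a, f (l a) := by
  calc ∑ b, f (m b) ≤ ∑ b, ∑ a, D b a * f (l a) := by
        refine Finset.sum_le_sum fun b _ => ?_
        rw [hm b]
        exact hf.map_sum_le (fun a _ => h0 b a) (h1 b) (fun a _ => hl a)
    _ = ∑ a, f (l a) := by
        rw [Finset.sum_comm]
        refine Finset.sum_congr rfl fun a _ => ?_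
        rw [← Finset.sum_mul, h2, one_mul]

lemma jensen_concave (h0 : ∀ b a, 0 ≤ D b a) (h1 : ∀ b, ∑ a, D b a = 1)
    (h2 : ∀ a, ∑ b, D b a = 1) (hm : ∀ b, m b = ∑ a, D b a * l a) (hl : ∀ a, 0 ≤ l a)
    {f : ℝ → ℝ} (hf : ConcaveOn ℝ (Set.Ici 0) f) : ∑ a, f (l a) ≤ ∑ b, f (m b) := by
  have := jensen_convex h0 h1 h2 hm hl hf.neg
  simpa using this

lemma concaveOn_indicator : ConcaveOn ℝ (Set.Ici (0 : ℝ)) (fun x => if x = 0 then (0 : ℝ) else 1) := by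
  refine ⟨convex_Ici 0, ?_⟩
  intro x hx y hy a b ha hb hab
  simp only [Set.mem_Ici] at hx hy
  simp only [smul_eq_mul]
  by_cases h : a * x + b * y = 0
  · have h1 : a * x = 0 := by nlinarith [mul_nonneg ha hx, mul_nonneg hb hy]
    have h2 : b * y = 0 := by nlinarith [mul_nonneg ha hx, mul_nonneg hb hy]
    rcases mul_eq_zero.1 h1 with h1 | h1 <;> rcases mul_eq_zero.1 h2 with h2 | h2 <;>
      simp [h1, h2]
  · rw [if_neg h]
    split_ifs <;> linarith

end General

variable {d n : ℕ} [Fact (Nat.Prime d)]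

/-- The basis permutation underlying the beam splitter. -/
def bsF (s t : ZMod d) (kl : QV d n × QV d n) : QV d n × QV d n :=
  ((fun a => s * kl.1 a + t * kl.2 a), (fun a => t * kl.1 a - s * kl.2 a))

lemma bsF_bsF {s t : ZMod d} (hst : s ^ 2 + t ^ 2 = 1) (kl : QV d n × QV d n) :
    bsF s t (bsF s t kl) = kl := by
  apply Prod.ext <;> funext a <;> simp only [bsF]
  · linear_combination kl.1 a * hst
  · linear_combination kl.2 a * hst

lemma bsU_conj {s t : ZMod d} (hst : s ^ 2 + t ^ 2 = 1)
    (M : Matrix (QV d n × QV d n) (QV d n × QV d n) ℂ) :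
    bsU d n s t * M * (bsU d n s t)ᴴ = M.submatrix (bsF s t) (bsF s t) := by
  have hU : ∀ x y, bsU d n s t x y = if bsF s t x = y then 1 else 0 := by
    intro x y
    change (if x = bsF s t y then (1 : ℂ) else 0) = _
    refine if_congr ?_ rfl rfl
    constructor
    · rintro rfl; exact bsF_bsF hst y
    · rintro rfl; exact (bsF_bsF hst x).symm
  ext x y
  simp only [Matrix.mul_apply, conjTranspose_apply, hU, submatrix_apply]
  simp [apply_ite]

lemma bsConv_apply {s t : ZMod d} (hst : s ^ 2 + t ^ 2 = 1) (ρ σ : Mat d n) (k k' : QV d n) :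
    bsConv d n s t ρ σ k k' = ∑ l, ρ (bsF s t (k, l)).1 (bsF s t (k', l)).1 *
      σ (bsF s t (k, l)).2 (bsF s t (k', l)).2 := by
  rw [bsConv, bsU_conj hst]
  rfl

/-- Convolution with a fixed second argument as a linear map. -/
noncomputable def bsLin {s t : ZMod d} (hst : s ^ 2 + t ^ 2 = 1) (σ : Mat d n) :
    Mat d n →ₗ[ℂ] Mat d n where
  toFun ρ := bsConv d n s t ρ σ
  map_add' x y := by
    ext k k'
    simp [bsConv_apply hst, add_mul, Finset.sum_add_distrib]
  map_smul' c x := by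
    ext k k'
    simp [bsConv_apply hst, Finset.mul_sum, mul_assoc]

lemma bsConv_posSemidef {s t : ZMod d} (hst : s ^ 2 + t ^ 2 = 1) {ρ σ : Mat d n}
    (hρ : ρ.PosSemidef) (hσ : σ.PosSemidef) : (bsConv d n s t ρ σ).PosSemidef := by
  have hk : (kron ρ σ).PosSemidef := hρ.kronecker hσ
  have : bsConv d n s t ρ σ =
      ∑ l : QV d n, (kron ρ σ).submatrix (fun k => bsF s t (k, l)) (fun k => bsF s t (k, l)) := by
    ext k k'
    rw [bsConv_apply hst, Matrix.sum_apply]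
    rfl
  rw [this]
  exact Matrix.posSemidef_sum _ fun l _ => hk.submatrix _

lemma bsConv_trace {s t : ZMod d} (hst : s ^ 2 + t ^ 2 = 1) (ρ σ : Mat d n) :
    (bsConv d n s t ρ σ).trace = ρ.trace * σ.trace := by
  have e : Function.Involutive (bsF s t : QV d n × QV d n → QV d n × QV d n) := bsF_bsF hst
  simp only [Matrix.trace, Matrix.diag_apply, bsConv_apply hst]
  rw [← Fintype.sum_prod_type' (f := fun k l => ρ (bsF s t (k, l)).1 (bsF s t (k, l)).1 *
      σ (bsF s t (k, l)).2 (bsF s t (k, l)).2), Finset.sum_mul_sum,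
    ← Fintype.sum_prod_type' (f := fun i j => ρ i i * σ j j)]
  exact (Equiv.sum_comp e.toPerm (fun x => ρ x.1 x.1 * σ x.2 x.2))

lemma bsConv_one {s t : ZMod d} (hs : s ≠ 0) (hst : s ^ 2 + t ^ 2 = 1) (σ : Mat d n)
    (hσ : σ.trace = 1) : bsConv d n s t 1 σ = 1 := by
  ext k k'
  rw [bsConv_apply hst]
  by_cases h : k = k'
  · subst h
    simp only [Matrix.one_apply_eq, one_mul]
    rw [← hσ]
    have hb : Function.Bijective (fun l : QV d n => (bsF s t (k, l)).2) := by
      rw [← Finite.injective_iff_bijective]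
      intro l l' hl
      funext a
      have := congrFun hl a
      simp only [bsF, sub_right_inj] at this
      exact mul_left_cancel₀ hs this
    exact hb.sum_comp (fun x => σ x x)
  · rw [Matrix.one_apply_ne h]
    refine Finset.sum_eq_zero fun l _ => ?_
    rw [Matrix.one_apply_ne, zero_mul]
    intro hc
    apply h
    funext a
    have := congrFun hc a
    simp only [bsF, add_left_inj] at this
    exact mul_left_cancel₀ hs this

lemma bsIter_isState {s t : ZMod d} (hst : s ^ 2 + t ^ 2 = 1) {ρ : Mat d n}
    (hρ : IsState d n ρ) (N : ℕ) : IsState d n (bsIter d n s t N ρ) := by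
  induction N with
  | zero => exact hρ
  | succ N ih =>
    refine ⟨bsConv_posSemidef hst ih.1 hρ.1, ?_⟩
    change (bsConv d n s t _ ρ).trace = 1
    rw [bsConv_trace hst, ih.2, hρ.2, one_mul]

lemma renyi_mono {s t : ZMod d} (hs : s ≠ 0) (hst : s ^ 2 + t ^ 2 = 1) {ρ σ : Mat d n}
    (hρ : IsState d n ρ) (hσ : IsState d n σ) (α : ℝ≥0∞) :
    renyiEnt α ρ ≤ renyiEnt α (bsConv d n s t ρ σ) := by
  have hA := hρ.1.isHermitian
  have hBp := bsConv_posSemidef hst hρ.1 hσ.1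
  have hB := hBp.isHermitian
  have hBtr : (bsConv d n s t ρ σ).trace = 1 := by
    rw [bsConv_trace hst, hρ.2, hσ.2, one_mul]
  obtain ⟨D, h0, h1, h2, hm⟩ := exists_doublyStochastic (bsLin hst σ)
    (fun A h => bsConv_posSemidef hst h hσ.1)
    (fun A => by
      change (bsConv d n s t A σ).trace = A.trace
      rw [bsConv_trace hst, hσ.2, mul_one])
    (bsConv_one hs hst σ hσ.2) ρ hA hB
  change ∀ b, hB.eigenvalues b = _ at hm
  have hl : ∀ a, 0 ≤ hA.eigenvalues a := hρ.1.eigenvalues_nonneg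
  have hmn : ∀ a, 0 ≤ hB.eigenvalues a := hBp.eigenvalues_nonneg
  have hlsum : ∑ a, hA.eigenvalues a = 1 := by
    have := hA.trace_eq_sum_eigenvalues
    rw [hρ.2] at this
    have h := congrArg Complex.re this
    simpa using h.symm
  have hmsum : ∑ a, hB.eigenvalues a = 1 := by
    have := hB.trace_eq_sum_eigenvalues
    rw [hBtr] at this
    have h := congrArg Complex.re this
    simpa using h.symm
  have key : ∀ (v : QV d n → ℝ), (∀ a, 0 ≤ v a) → ∑ a, v a = 1 → ∃ a, 0 < v a := by
    intro v hv hs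
    by_contra! hc
    have : ∑ a, v a ≤ 0 := Finset.sum_nonpos fun a _ => hc a
    linarith
  have keyp : ∀ (v : QV d n → ℝ), (∀ a, 0 ≤ v a) → ∑ a, v a = 1 → ∀ p : ℝ,
      0 < ∑ a, v a ^ p := by
    intro v hv hs p
    obtain ⟨a, ha⟩ := key v hv hs
    exact Finset.sum_pos' (fun i _ => Real.rpow_nonneg (hv i) p)
      ⟨a, Finset.mem_univ _, Real.rpow_pos_of_pos ha p⟩
  unfold renyiEnt
  rw [dif_pos hA, dif_pos hB]
  by_cases hα0 : α = 0
  · simp only [if_pos hα0]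
    have hj := jensen_concave h0 h1 h2 hm hl concaveOn_indicator
    have hr : ∀ (M : Mat d n) (hM : M.IsHermitian),
        (M.rank : ℝ) = ∑ a, (if hM.eigenvalues a = 0 then (0 : ℝ) else 1) := by
      intro M hM
      rw [hM.rank_eq_card_non_zero_eigs, Fintype.card_subtype, Finset.card_filter]
      push_cast
      refine Finset.sum_congr rfl fun a _ => ?_
      by_cases h : hM.eigenvalues a = 0 <;> simp [h]
    rw [← hr, ← hr] at hj
    refine Real.log_le_log ?_ hj
    rw [hr _ hA]
    obtain ⟨a, ha⟩ := key _ hl hlsum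
    refine Finset.sum_pos' (fun i _ => by split_ifs <;> norm_num) ⟨a, Finset.mem_univ _, ?_⟩
    rw [if_neg ha.ne']; norm_num
  simp only [if_neg hα0]
  by_cases hα1 : α = 1
  · simp only [if_pos hα1]
    have hj := jensen_concave h0 h1 h2 hm hl Real.concaveOn_negMulLog
    simpa [Real.negMulLog, Finset.sum_neg_distrib] using hj
  simp only [if_neg hα1]
  by_cases hαt : α = ⊤
  · simp only [if_pos hαt]
    have hbA : BddAbove (Set.range hA.eigenvalues) := (Set.finite_range _).bddAbove
    have hbB : BddAbove (Set.range hB.eigenvalues) := (Set.finite_range _).bddAbove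
    refine neg_le_neg (Real.log_le_log ?_ ?_)
    · obtain ⟨a, ha⟩ := key _ hmn hmsum
      exact ha.trans_le (le_ciSup hbB a)
    · refine ciSup_le fun b => ?_
      rw [hm b]
      calc ∑ a, D b a * hA.eigenvalues a ≤ ∑ a, D b a * (⨆ i, hA.eigenvalues i) :=
            Finset.sum_le_sum fun a _ => mul_le_mul_of_nonneg_left (le_ciSup hbA a) (h0 b a)
        _ = _ := by rw [← Finset.sum_mul, h1, one_mul]
  simp only [if_neg hαt]
  have hp0 : 0 < α.toReal := ENNReal.toReal_pos hα0 hαt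
  have hp1 : α.toReal ≠ 1 := by
    intro h
    exact hα1 ((ENNReal.toReal_eq_one_iff α).1 h)
  rcases lt_or_gt_of_ne hp1 with hp | hp
  · have hj := jensen_concave h0 h1 h2 hm hl (Real.concaveOn_rpow hp0.le hp.le)
    refine mul_le_mul_of_nonneg_left (Real.log_le_log (keyp _ hl hlsum _) hj) ?_
    exact inv_nonneg.2 (by linarith)
  · have hj := jensen_convex h0 h1 h2 hm hl (convexOn_rpow hp.le)
    refine mul_le_mul_of_nonpos_left (Real.log_le_log (keyp _ hmn hmsum _) hj) ?_
    exact inv_nonpos.2 (by linarith)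

end PaperQI

namespace PaperQI

/-- Second law of thermodynamics for quantum convolution: for every
state `ρ`, every `α ∈ [0,∞]` and every `N ≥ 0`, `H_α(⊠^{N+1} ρ) ≥ H_α(⊠^N ρ)`. -/
theorem statement18 (d n : ℕ) [Fact (Nat.Prime d)] (hd : Odd d) (hn : 1 ≤ n)
    (s t : ZMod d) (hs : s ≠ 0) (ht : t ≠ 0) (hst : s ^ 2 + t ^ 2 = 1)
    (ρ : Mat d n) (hρ : IsState d n ρ) (α : ℝ≥0∞) (N : ℕ) :
    renyiEnt α (bsIter d n s t N ρ) ≤ renyiEnt α (bsIter d n s t (N + 1) ρ) := by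
  exact renyi_mono hs hst (bsIter_isState hst hρ N) hρ α

end PaperQI
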